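/- Biorthogonality of the elliptic 6j-symbols: for integers 0 ≤ n, l ≤ k and all α, β, γ, δ ∈ ℂ such that every bracket appearing in a denominator of the R-symbols involved is nonzero, one has Σ_{m=0}^{k} R_n^m(α,β,γ,δ;k) · R_m^l(γ,δ,α,β;k) = δ_{n,l} (1 if n = l, 0 otherwise). -/

import Mathlib

noncomputable section

open Complex Finset

namespace Ell

/-- `x^s = exp(-iπ s /(r τ))`. -/
def xp (τ : ℂ) (r : ℝ) (s : ℂ) : ℂ :=
  Complex.exp (-Complex.I * (Real.pi : ℂ) * s / ((r : ℂ) * τ))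

/-- `Θ_p(z) = ∏_{j ≥ 0} (1 - z p^j)(1 - p^{j+1}/z)(1 - p^{j+1})`. -/
def Theta (p z : ℂ) : ℂ :=
  ∏' j : ℕ, ((1 - z * p ^ j) * (1 - p ^ (j + 1) / z) * (1 - p ^ (j + 1)))

/-- The bracket `[u] = x^{u²/r - u} Θ_p(x^{2u})` with `p = x^{2r}`. -/
def br (τ : ℂ) (r : ℝ) (u : ℂ) : ℂ :=
  xp τ r (u ^ 2 / (r : ℂ) - u) * Theta (xp τ r (2 * (r : ℂ))) (xp τ r (2 * u))

/-- Elliptic shifted factorial `[u]_n = ∏_{j=0}^{n-1} [u+j]`. -/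
def brF (τ : ℂ) (r : ℝ) (u : ℂ) (n : ℕ) : ℂ :=
  ∏ j ∈ Finset.range n, br τ r (u + (j : ℂ))

/-- Elliptic binomial coefficient `C_n^k(α,β,γ)`. -/
def Cnk (τ : ℂ) (r : ℝ) (k n : ℕ) (α β γ : ℂ) : ℂ :=
  brF τ r 1 k / (brF τ r 1 n * brF τ r 1 (k - n)) *
    (brF τ r (α - γ) n * brF τ r (α + γ + (k : ℂ) - (n : ℂ)) n *
      brF τ r (α - β) (k - n) * brF τ r (α + β + (n : ℂ)) (k - n)) /
    (brF τ r (β - γ + (n : ℂ) - (k : ℂ)) n * brF τ r (γ - β - (n : ℂ)) (k - n) *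
      brF τ r (β + γ) k)

/-- The elliptic 6j-symbol `R_n^m(α,β,γ,δ;k)`. -/
def Rnm (τ : ℂ) (r : ℝ) (k n m : ℕ) (α β γ δ : ℂ) : ℂ :=
  ∑ j ∈ Finset.range (min n m + 1),
    Cnk τ r n j α γ (β + (k : ℂ) - (n : ℂ)) * Cnk τ r (k - j) (m - j) β (γ + (j : ℂ)) δ

/-- Terminating very-well-poised elliptic hypergeometric sum with explicit
truncation `N`:  `Σ_{j=0}^N ([u₀+2j]/[u₀]) ([u₀]_j/[1]_j) ∏ᵢ [uᵢ]_j/[u₀+1-uᵢ]_j`. -/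
def Vsum (τ : ℂ) (r : ℝ) (u₀ : ℂ) (us : List ℂ) (N : ℕ) : ℂ :=
  ∑ j ∈ Finset.range (N + 1),
    br τ r (u₀ + 2 * (j : ℂ)) / br τ r u₀ * (brF τ r u₀ j / brF τ r 1 j) *
      (us.map fun ui => brF τ r ui j / brF τ r (u₀ + 1 - ui) j).prod

/-- "Every bracket appearing in a denominator of `C_n^k(·,β,γ)` is nonzero". -/
def CdenomNZ (τ : ℂ) (r : ℝ) (k n : ℕ) (β γ : ℂ) : Prop :=
  brF τ r 1 n ≠ 0 ∧ brF τ r 1 (k - n) ≠ 0 ∧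
    brF τ r (β - γ + (n : ℂ) - (k : ℂ)) n ≠ 0 ∧
    brF τ r (γ - β - (n : ℂ)) (k - n) ≠ 0 ∧ brF τ r (β + γ) k ≠ 0

/-- "Every bracket appearing in a denominator of `R_n^m(α,β,γ,δ;k)` is nonzero". -/
def RdenomNZ (τ : ℂ) (r : ℝ) (k n m : ℕ) (β γ δ : ℂ) : Prop :=
  ∀ j ≤ min n m,
    CdenomNZ τ r n j γ (β + (k : ℂ) - (n : ℂ)) ∧
      CdenomNZ τ r (k - j) (m - j) (γ + (j : ℂ)) δ

/-- Jacobi theta `ϑ₁(v|σ)`. -/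
def th1 (v σ : ℂ) : ℂ :=
  2 * Complex.exp (2 * (Real.pi : ℂ) * Complex.I * σ / 8) *
    (∏' n : ℕ, (1 - Complex.exp (2 * (Real.pi : ℂ) * Complex.I * σ) ^ (n + 1))) *
    Complex.sin ((Real.pi : ℂ) * v) *
    ∏' n : ℕ,
      (1 - 2 * Complex.exp (2 * (Real.pi : ℂ) * Complex.I * σ) ^ (n + 1) *
            Complex.cos (2 * (Real.pi : ℂ) * v) +
        Complex.exp (2 * (Real.pi : ℂ) * Complex.I * σ) ^ (2 * (n + 1)))

/-- Jacobi theta `ϑ₀(v|σ)`. -/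
def th0 (v σ : ℂ) : ℂ :=
  -Complex.I * Complex.exp ((Real.pi : ℂ) * Complex.I * (v + σ / 4)) * th1 (v + σ / 2) σ

/-- Jacobi theta `ϑ₂(v|σ)`. -/
def th2 (v σ : ℂ) : ℂ := th1 (v + 1 / 2) σ

/-- Jacobi theta `ϑ₃(v|σ)`. -/
def th3 (v σ : ℂ) : ℂ :=
  Complex.exp ((Real.pi : ℂ) * Complex.I * (v + σ / 4)) * th1 (v + (σ + 1) / 2) σ

/-- Intertwining vector component `ψ_ε(u)^a_b`, `ε ∈ {1, -1}`. -/
def psi (τ : ℂ) (r : ℝ) (u : ℂ) (ε : ℤ) (a b : ℤ) : ℂ :=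
  if ε = 1 then th0 ((((a : ℂ) - (b : ℂ)) * u + (a : ℂ)) / (2 * (r : ℂ))) (τ / 2)
  else th3 ((((a : ℂ) - (b : ℂ)) * u + (a : ℂ)) / (2 * (r : ℂ))) (τ / 2)

/-- The constant `C = x^{-r/4} e^{-iπ/4} τ^{1/2}`. -/
def Cc (τ : ℂ) (r : ℝ) : ℂ :=
  xp τ r (-(r : ℂ) / 4) * Complex.exp (-(Real.pi : ℂ) * Complex.I / 4) * τ ^ (1 / 2 : ℂ)

/-- Dual intertwining vector component `ψ*_ε(u)^a_b = -ε(a-b) C² ψ_{-ε}(u-1)^a_b/(2[b][u])`. -/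
def psiStar (τ : ℂ) (r : ℝ) (u : ℂ) (ε : ℤ) (a b : ℤ) : ℂ :=
  -(ε : ℂ) * ((a : ℂ) - (b : ℂ)) * Cc τ r ^ 2 * psi τ r (u - 1) (-ε) a b /
    (2 * br τ r (b : ℂ) * br τ r u)

/-- Sign attached to a boolean. -/
def sg (b : Bool) : ℤ := if b then 1 else -1

/-- Canonical path from `a`: up for `j ≤ n`, down afterwards. -/
def cpathZ (a n : ℤ) (j : ℕ) : ℤ := if (j : ℤ) ≤ n then a + j else a + 2 * n - j

/-- Admissibility: `a - b ∈ {-k, -k+2, …, k}`. -/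
def adm (k : ℕ) (a b : ℤ) : Prop := (a - b).natAbs ≤ k ∧ (a - b - (k : ℤ)) % 2 = 0

instance (k : ℕ) (a b : ℤ) : Decidable (adm k a b) := by unfold adm; infer_instance

/-- Fused intertwining vector component `ψ^{(k)}_μ(u)^a_b` (zero if `a,b` not admissible). -/
def psiF (τ : ℂ) (r : ℝ) (k : ℕ) (μ : ℤ) (u : ℂ) (a b : ℤ) : ℂ :=
  if adm k a b then
    ∑ ε ∈ Finset.univ.filter fun ε : Fin k → Bool => (∑ j, sg (ε j)) = μ,
      ∏ j : Fin k,
        psi τ r (u + (k : ℂ) - (((j : ℕ) + 1 : ℕ) : ℂ)) (sg (ε j))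
          (cpathZ a (((k : ℤ) - (a - b)) / 2) (j : ℕ))
          (cpathZ a (((k : ℤ) - (a - b)) / 2) ((j : ℕ) + 1))
  else 0

/-- Partial-sum path attached to a sign sequence `δ`, starting at `a`. -/
def spath (k : ℕ) (a : ℤ) (δ : Fin k → Bool) (j : ℕ) : ℤ :=
  a + ∑ i ∈ Finset.range j, if h : i < k then sg (δ ⟨i, h⟩) else 0

/-- Fused dual intertwining vector component `ψ*^{(k)}_μ(u)^b_a`
(sum over all admissible paths from `a` to `b`; zero if not admissible). -/
def psiStarF (τ : ℂ) (r : ℝ) (k : ℕ) (μ : ℤ) (u : ℂ) (b a : ℤ) : ℂ :=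
  if adm k a b then
    ∑ δ ∈ Finset.univ.filter fun δ : Fin k → Bool => (∑ j, sg (δ j)) = b - a,
      ∏ j : Fin k,
        psiStar τ r (u + (k : ℂ) - (((j : ℕ) + 1 : ℕ) : ℂ))
          (if ((j : ℕ) + 1 : ℤ) ≤ ((k : ℤ) + μ) / 2 then 1 else -1)
          (spath k a δ ((j : ℕ) + 1)) (spath k a δ (j : ℕ))
  else 0

/-- The `L`-matrix `L^{(k)}(a,b;c,d|u) = Σ_μ ψ*^{(k)}_μ(u)^d_c ψ^{(k)}_μ(u)^a_b`. -/
def Lk (τ : ℂ) (r : ℝ) (k : ℕ) (u : ℂ) (a b c d : ℤ) : ℂ :=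
  ∑ i ∈ Finset.range (k + 1),
    psiStarF τ r k ((k : ℤ) - 2 * (i : ℤ)) u d c * psiF τ r k ((k : ℤ) - 2 * (i : ℤ)) u a b

/-- Normalized face weight `W̄(a,b;d,c|u)` (arguments ordered (NW, NE; SW, SE)). -/
def Wb (τ : ℂ) (r : ℝ) (u : ℂ) (a b d c : ℤ) : ℂ :=
  if b = a + 1 ∧ d = a + 1 ∧ c = a + 2 then 1
  else if b = a - 1 ∧ d = a - 1 ∧ c = a - 2 then 1
  else if b = a + 1 ∧ d = a + 1 ∧ c = a then
    br τ r ((a : ℂ) - u) * br τ r 1 / (br τ r (a : ℂ) * br τ r (1 + u))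
  else if b = a - 1 ∧ d = a - 1 ∧ c = a then
    br τ r ((a : ℂ) + u) * br τ r 1 / (br τ r (a : ℂ) * br τ r (1 + u))
  else if b = a + 1 ∧ d = a - 1 ∧ c = a then
    br τ r ((a : ℂ) + 1) * br τ r u / (br τ r (a : ℂ) * br τ r (1 + u))
  else if b = a - 1 ∧ d = a + 1 ∧ c = a then
    br τ r ((a : ℂ) - 1) * br τ r u / (br τ r (a : ℂ) * br τ r (1 + u))
  else 0

/-- Sequence with prescribed endpoints `d`, `c` and free interior values `f`. -/
def seqI (k : ℕ) (d c : ℤ) (f : Fin (k - 1) → ℤ) (j : ℕ) : ℤ :=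
  if h0 : j = 0 then d
  else if hj : j < k then f ⟨j - 1, by omega⟩ else c

/-- Fused face weight `W^{(k,1)}(a,b;d,c|u)`. -/
def Wk1 (τ : ℂ) (r : ℝ) (k : ℕ) (u : ℂ) (a b d c : ℤ) : ℂ :=
  if adm k a b then
    ∑' f : Fin (k - 1) → ℤ,
      ∏ j ∈ Finset.range k,
        Wb τ r (u + (k : ℂ) - ((j : ℂ) + 1))
          (cpathZ a (((k : ℤ) - (a - b)) / 2) j)
          (cpathZ a (((k : ℤ) - (a - b)) / 2) (j + 1))
          (seqI k d c f j) (seqI k d c f (j + 1))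
  else 0

/-- Fused face weight `W^{(k,l)}(a,b;d,c|u)`. -/
def Wkl (τ : ℂ) (r : ℝ) (k l : ℕ) (u : ℂ) (a b d c : ℤ) : ℂ :=
  if adm l b c then
    ∑' g : Fin (l - 1) → ℤ,
      ∏ i ∈ Finset.range l,
        Wk1 τ r k (u - (l : ℂ) + ((i : ℂ) + 1))
          (seqI l a d g i) (cpathZ b (((l : ℤ) - (b - c)) / 2) i)
          (seqI l a d g (i + 1)) (cpathZ b (((l : ℤ) - (b - c)) / 2) (i + 1))
  else 0

/-- Eight-vertex weight `ā(u)`. -/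
def aw (τ : ℂ) (r : ℝ) (u : ℂ) : ℂ :=
  th2 (1 / (2 * (r : ℂ))) (τ / 2) * th2 (u / (2 * (r : ℂ))) (τ / 2) /
    (th2 0 (τ / 2) * th2 ((1 + u) / (2 * (r : ℂ))) (τ / 2))

/-- Eight-vertex weight `b̄(u)`. -/
def bw (τ : ℂ) (r : ℝ) (u : ℂ) : ℂ :=
  th2 (1 / (2 * (r : ℂ))) (τ / 2) * th1 (u / (2 * (r : ℂ))) (τ / 2) /
    (th2 0 (τ / 2) * th1 ((1 + u) / (2 * (r : ℂ))) (τ / 2))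

/-- Eight-vertex weight `c̄(u)`. -/
def cw (τ : ℂ) (r : ℝ) (u : ℂ) : ℂ :=
  th1 (1 / (2 * (r : ℂ))) (τ / 2) * th2 (u / (2 * (r : ℂ))) (τ / 2) /
    (th2 0 (τ / 2) * th1 ((1 + u) / (2 * (r : ℂ))) (τ / 2))

/-- Eight-vertex weight `d̄(u)`. -/
def dw (τ : ℂ) (r : ℝ) (u : ℂ) : ℂ :=
  -(th1 (1 / (2 * (r : ℂ))) (τ / 2) * th1 (u / (2 * (r : ℂ))) (τ / 2)) /
    (th2 0 (τ / 2) * th2 ((1 + u) / (2 * (r : ℂ))) (τ / 2))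

/-- The normalized eight-vertex `R`-matrix entry `R̄(u)_{(ε₁,ε₂),(ε₁',ε₂')}`. -/
def Rbar (τ : ℂ) (r : ℝ) (u : ℂ) (e1 e2 e1' e2' : ℤ) : ℂ :=
  if e1' = e1 ∧ e2' = e2 ∧ e1 = e2 then aw τ r u
  else if e1' = e1 ∧ e2' = e2 ∧ e1 = -e2 then bw τ r u
  else if e1' = e2 ∧ e2' = e1 ∧ e1 = -e2 then cw τ r u
  else if e1' = -e1 ∧ e2' = -e2 ∧ e1 = e2 then dw τ r u
  else 0

/-- Sklyanin standard-basis vector `v_+(z)`. -/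
def vp (τ z : ℂ) : ℂ := th3 (2 * z) (2 * τ) - th2 (2 * z) (2 * τ)

/-- Sklyanin standard-basis vector `v_-(z)`. -/
def vm (τ z : ℂ) : ℂ := th3 (2 * z) (2 * τ) + th2 (2 * z) (2 * τ)


section Alg

variable {τ : ℂ} {r : ℝ}

/-- Plücker-type factorisation. -/
def Wei (τ : ℂ) (r : ℝ) : Prop :=
  ∃ P Q : ℂ → ℂ, ∀ a b, br τ r (a + b) * br τ r (a - b) = P a * Q b - Q a * P b

lemma three (h : Wei τ r) (a b c d : ℂ) :
    br τ r (a + b) * br τ r (a - b) * (br τ r (c + d) * br τ r (c - d))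
    - br τ r (a + c) * br τ r (a - c) * (br τ r (b + d) * br τ r (b - d))
    + br τ r (a + d) * br τ r (a - d) * (br τ r (b + c) * br τ r (b - c)) = 0 := by
  obtain ⟨P, Q, h⟩ := h
  simp only [h]; ring

lemma br_odd (h : Wei τ r) (h1 : br τ r 1 ≠ 0) (v : ℂ) : br τ r (-v) = - br τ r v := by
  obtain ⟨P, Q, h⟩ := h
  have e1 := h ((1 + v) / 2) ((1 - v) / 2)
  have e2 := h ((1 - v) / 2) ((1 + v) / 2)
  have a1 : (1 + v) / 2 + (1 - v) / 2 = 1 := by ring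
  have a2 : (1 + v) / 2 - (1 - v) / 2 = v := by ring
  have a3 : (1 - v) / 2 + (1 + v) / 2 = 1 := by ring
  have a4 : (1 - v) / 2 - (1 + v) / 2 = -v := by ring
  rw [a1, a2] at e1
  rw [a3, a4] at e2
  have : br τ r 1 * br τ r (-v) = br τ r 1 * (- br τ r v) := by linear_combination e1 + e2
  exact mul_left_cancel₀ h1 this

lemma br_odd' (h : Wei τ r) (h1 : br τ r 1 ≠ 0) {v w : ℂ} (e : v + w = 0) :
    br τ r v = - br τ r w := by
  rw [← br_odd h h1]; congr 1; linear_combination e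

lemma brF_zero (u : ℂ) : brF τ r u 0 = 1 := by simp [brF]

lemma brF_succ (u : ℂ) (n : ℕ) : brF τ r u (n + 1) = brF τ r u n * br τ r (u + n) := by
  simp [brF, Finset.prod_range_succ]

lemma brF_succ' (u : ℂ) (n : ℕ) : brF τ r u (n + 1) = br τ r u * brF τ r (u + 1) n := by
  simp only [brF, Finset.prod_range_succ']
  rw [mul_comm]
  congr 1
  · simp
  · apply Finset.prod_congr rfl; intro i _; congr 1; push_cast; ring

lemma brF_add (u : ℂ) (m n : ℕ) : brF τ r u (m + n) = brF τ r u m * brF τ r (u + m) n := by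
  simp only [brF, Finset.prod_range_add]
  congr 1
  apply Finset.prod_congr rfl; intro i _; congr 1; push_cast; ring

lemma brF_ne {u : ℂ} {n : ℕ} (h : ∀ j < n, br τ r (u + j) ≠ 0) : brF τ r u n ≠ 0 := by
  simp only [brF]
  exact Finset.prod_ne_zero_iff.2 fun j hj => h j (Finset.mem_range.1 hj)

/-- genericity for a pair -/
def Gen (τ : ℂ) (r : ℝ) (x y : ℂ) : Prop :=
  (∀ s : ℤ, br τ r (x - y + s) ≠ 0) ∧ (∀ s : ℤ, br τ r (x + y + s) ≠ 0)

lemma Gen.shift {x y : ℂ} (h : Gen τ r x y) (a b : ℤ) : Gen τ r (x + a) (y + b) := by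
  refine ⟨fun s => ?_, fun s => ?_⟩
  · have := h.1 (a - b + s); convert this using 2; push_cast; ring
  · have := h.2 (a + b + s); convert this using 2; push_cast; ring

lemma Gen.m {x y : ℂ} (h : Gen τ r x y) (z : ℂ) (s : ℤ) (e : z = x - y + s) : br τ r z ≠ 0 := by
  rw [e]; exact h.1 s
lemma Gen.p {x y : ℂ} (h : Gen τ r x y) (z : ℂ) (s : ℤ) (e : z = x + y + s) : br τ r z ≠ 0 := by
  rw [e]; exact h.2 s

lemma Gen.symm (hw : Wei τ r) (h1 : br τ r 1 ≠ 0) {x y : ℂ} (h : Gen τ r x y) : Gen τ r y x := by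
  refine ⟨fun s => ?_, fun s => ?_⟩
  · have := h.1 (-s)
    rw [br_odd' hw h1 (w := x - y + ((-s : ℤ) : ℂ)) (by push_cast; ring)]
    exact neg_ne_zero.2 this
  · have := h.2 s; convert this using 2; ring

lemma Gen.Fm {x y : ℂ} (h : Gen τ r x y) (z : ℂ) (n : ℕ) (s : ℤ) (e : z = x - y + s) :
    brF τ r z n ≠ 0 := brF_ne fun j _ => h.m _ (s + j) (by rw [e]; push_cast; ring)
lemma Gen.Fp {x y : ℂ} (h : Gen τ r x y) (z : ℂ) (n : ℕ) (s : ℤ) (e : z = x + y + s) :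
    brF τ r z n ≠ 0 := brF_ne fun j _ => h.p _ (s + j) (by rw [e]; push_cast; ring)

/-- two-index version of the binomial coefficient -/
lemma Cnk_ij (i j : ℕ) (α β γ : ℂ) : Cnk τ r (i + j) i α β γ =
    brF τ r 1 (i + j) / (brF τ r 1 i * brF τ r 1 j) *
    (brF τ r (α - γ) i * brF τ r (α + γ + j) i *
      brF τ r (α - β) j * brF τ r (α + β + i) j) /
    (brF τ r (β - γ - j) i * brF τ r (γ - β - i) j * brF τ r (β + γ) (i + j)) := by
  unfold Cnk
  have e1 : α + γ + ((i + j : ℕ) : ℂ) - i = α + γ + j := by push_cast; ring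
  have e2 : β - γ + (i : ℂ) - ((i + j : ℕ) : ℂ) = β - γ - j := by push_cast; ring
  rw [e1, e2, Nat.add_sub_cancel_left]

lemma rec_zero (hw : Wei τ r) (h1 : br τ r 1 ≠ 0) (j : ℕ) (hF : brF τ r 1 (j + 1) ≠ 0)
    (α β γ : ℂ) (g : Gen τ r β γ) :
    Cnk τ r (0 + (j + 1)) 0 α β γ = Cnk τ r (0 + j) 0 α β γ *
      (br τ r (α - β + j) * br τ r (α + β + j) / (br τ r (γ - β + j) * br τ r (β + γ + j))) := by
  have g' := g.symm hw h1
  have n1 := g'.m (γ - β + j) j (by simp)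
  have n2 := g.p (β + γ + j) j (by simp)
  have n3 := g'.Fm (γ - β) j 0 (by simp)
  have n4 := g.Fp (β + γ) j 0 (by simp)
  rw [Cnk_ij, Cnk_ij]
  simp only [brF_zero, Nat.zero_add, Nat.cast_zero, sub_zero, add_zero, one_mul, mul_one]
  rw [brF_succ] at hF
  have n5 := left_ne_zero_of_mul hF
  have n6 := right_ne_zero_of_mul hF
  simp only [brF_succ]
  field_simp

lemma rec_last (i : ℕ) (hF : brF τ r 1 (i + 1) ≠ 0)
    (α β γ : ℂ) (g : Gen τ r β γ) :
    Cnk τ r ((i + 1) + 0) (i + 1) α β γ = Cnk τ r (i + 0) i α β γ *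
      (br τ r (α - γ + i) * br τ r (α + γ + i) / (br τ r (β - γ + i) * br τ r (β + γ + i))) := by
  have n1 := g.m (β - γ + i) i (by simp)
  have n2 := g.p (β + γ + i) i (by simp)
  have n3 := g.Fm (β - γ) i 0 (by simp)
  have n4 := g.Fp (β + γ) i 0 (by simp)
  rw [Cnk_ij, Cnk_ij]
  simp only [brF_zero, Nat.cast_zero, sub_zero, add_zero, mul_one]
  rw [brF_succ] at hF
  have n5 := left_ne_zero_of_mul hF
  have n6 := right_ne_zero_of_mul hF
  simp only [brF_succ]
  field_simp

lemma core (hw : Wei τ r) (h1 : br τ r 1 ≠ 0) (i j : ℂ) (α β γ : ℂ) :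
    br τ r (1 + (i + j + 1)) * br τ r (α + γ + (j + 1) + i) * br τ r (α + β + (i + 1) + j) *
        br τ r (γ - β - i + j)
    - br τ r (1 + i) * br τ r (α + β + i) * br τ r (α + γ + i + 2 * j + 2) *
        br τ r (γ - β - (i + 1))
    + br τ r (1 + j) * br τ r (α + γ + j) * br τ r (α + β + 2 * i + j + 2) *
        br τ r (β - γ - (j + 1)) = 0 := by
  have t := three hw (α + (β + γ) / 2 + i + j + 1) ((γ - β) / 2) ((γ - β) / 2 + j + 1)
    ((β - γ) / 2 + i + 1)
  have e1 : α + (β + γ) / 2 + i + j + 1 + (γ - β) / 2 = α + γ + (j + 1) + i := by ring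
  have e2 : α + (β + γ) / 2 + i + j + 1 - (γ - β) / 2 = α + β + (i + 1) + j := by ring
  have e3 : (γ - β) / 2 + j + 1 + ((β - γ) / 2 + i + 1) = 1 + (i + j + 1) := by ring
  have e4 : (γ - β) / 2 + j + 1 - ((β - γ) / 2 + i + 1) = γ - β - i + j := by ring
  have e5 : α + (β + γ) / 2 + i + j + 1 + ((γ - β) / 2 + j + 1) = α + γ + i + 2 * j + 2 := by ring
  have e6 : α + (β + γ) / 2 + i + j + 1 - ((γ - β) / 2 + j + 1) = α + β + i := by ring
  have e7 : (γ - β) / 2 + ((β - γ) / 2 + i + 1) = 1 + i := by ring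
  have e8 : (γ - β) / 2 - ((β - γ) / 2 + i + 1) = γ - β - (i + 1) := by ring
  have e9 : α + (β + γ) / 2 + i + j + 1 + ((β - γ) / 2 + i + 1) = α + β + 2 * i + j + 2 := by ring
  have e10 : α + (β + γ) / 2 + i + j + 1 - ((β - γ) / 2 + i + 1) = α + γ + j := by ring
  have e11 : (γ - β) / 2 - ((γ - β) / 2 + j + 1) = -(1 + j) := by ring
  have e12 : (γ - β) / 2 + ((γ - β) / 2 + j + 1) = -(β - γ - (j + 1)) := by ring
  rw [e1, e2, e3, e4, e5, e6, e7, e8, e9, e10, e11, e12, br_odd hw h1, br_odd hw h1] at t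
  linear_combination t

lemma rec_mid (hw : Wei τ r) (h1 : br τ r 1 ≠ 0) (i j : ℕ) (hF : brF τ r 1 (i + j + 2) ≠ 0)
    (α β γ : ℂ) (g : Gen τ r β γ) :
    Cnk τ r ((i + 1) + (j + 1)) (i + 1) α β γ =
      Cnk τ r (i + (j + 1)) i α β γ *
        (br τ r (α - γ + i) * br τ r (α + γ + i + 2 * j + 2) /
          (br τ r (β - γ + i - (j + 1)) * br τ r (β + γ + (i + j + 1)))) +
      Cnk τ r ((i + 1) + j) (i + 1) α β γ *
        (br τ r (α - β + j) * br τ r (α + β + 2 * i + j + 2) /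
          (br τ r (γ - β + j - (i + 1)) * br τ r (β + γ + (i + j + 1)))) := by
  have g' := g.symm hw h1
  have hne : ∀ m ≤ i + j + 2, brF τ r 1 m ≠ 0 := by
    intro m hm
    obtain ⟨d, hd⟩ := Nat.exists_eq_add_of_le hm
    rw [hd, brF_add] at hF
    exact left_ne_zero_of_mul hF
  have m1 := hne (i + 1) (by omega)
  have m2 := hne (j + 1) (by omega)
  have m3 := hne (i + j + 1) (by omega)
  rw [brF_succ] at m1 m2
  have m4 := left_ne_zero_of_mul m1
  have m5 := right_ne_zero_of_mul m1
  have m6 := left_ne_zero_of_mul m2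
  have m7 := right_ne_zero_of_mul m2
  rw [Cnk_ij, Cnk_ij, Cnk_ij]
  have c := core hw h1 i j α β γ
  push_cast
  have s1 : brF τ r 1 (i + 1 + (j + 1)) = brF τ r 1 (i + j + 1) * br τ r (1 + (i + j + 1)) := by
    rw [show i + 1 + (j + 1) = (i + j + 1) + 1 by ring, brF_succ]; push_cast; rfl
  have s2 : brF τ r (β + γ) (i + 1 + (j + 1)) =
      brF τ r (β + γ) (i + j + 1) * br τ r (β + γ + (i + j + 1)) := by
    rw [show i + 1 + (j + 1) = (i + j + 1) + 1 by ring, brF_succ]; push_cast; rfl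
  have s3 : brF τ r (β - γ - (j + 1)) (i + 1) = br τ r (β - γ - (j + 1)) * brF τ r (β - γ - j) i := by
    rw [brF_succ']; congr 2; ring
  have s4 : brF τ r (γ - β - (i + 1)) (j + 1) = br τ r (γ - β - (i + 1)) * brF τ r (γ - β - i) j := by
    rw [brF_succ']; congr 2; ring
  have s5 : brF τ r (β - γ - (j + 1)) i * br τ r (β - γ + i - (j + 1))
      = br τ r (β - γ - (j + 1)) * brF τ r (β - γ - j) i := by
    rw [← s3, brF_succ]; congr 2; ring
  have s6 : brF τ r (γ - β - (i + 1)) j * br τ r (γ - β + j - (i + 1))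
      = br τ r (γ - β - (i + 1)) * brF τ r (γ - β - i) j := by
    rw [← s4, brF_succ]; congr 2; ring
  have s7 : brF τ r (α + β + i) (j + 1) = br τ r (α + β + i) * brF τ r (α + β + (i + 1)) j := by
    rw [brF_succ']; congr 2; ring
  have s8 : brF τ r (α + γ + j) (i + 1) = br τ r (α + γ + j) * brF τ r (α + γ + (j + 1)) i := by
    rw [brF_succ']; congr 2; ring
  have o1 : br τ r (β - γ - j + i) = - br τ r (γ - β - i + j) := br_odd' hw h1 (by ring)
  have n1 := g.m (β - γ + i - (j + 1)) (i - (j + 1)) (by push_cast; ring)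
  have n2 := g'.m (γ - β + j - (i + 1)) (j - (i + 1)) (by push_cast; ring)
  have n3 := g.p (β + γ + (i + j + 1)) (i + j + 1) (by push_cast; ring)
  have n4 := g.Fp (β + γ) (i + j + 1) 0 (by simp)
  have n5 := g.m (β - γ - (j + 1)) (- (j + 1)) (by push_cast; ring)
  have n6 := g'.m (γ - β - (i + 1)) (- (i + 1)) (by push_cast; ring)
  have n7 := g.Fm (β - γ - j) i (-j) (by push_cast; ring)
  have n8 := g'.Fm (γ - β - i) j (-i) (by push_cast; ring)
  have n9 := g'.m (γ - β - i + j) (- i + j) (by push_cast; ring)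
  have n10 := g.Fm (β - γ - (j + 1)) i (-(j + 1)) (by push_cast; ring)
  have n11 := g'.Fm (γ - β - (i + 1)) j (-(i + 1)) (by push_cast; ring)
  have s5' := eq_div_of_mul_eq n1 s5
  have s6' := eq_div_of_mul_eq n2 s6
  have k1 : i + (j + 1) = i + j + 1 := by ring
  have k2 : i + 1 + j = i + j + 1 := by ring
  rw [s1, s2, s3, s4, s5', s6', s7, s8, k1, k2]
  simp only [brF_succ _ i, brF_succ _ j]
  rw [o1]
  clear s1 s2 s3 s4 s5 s6 s7 s8 s5' s6' o1 hF hne n10 n11 m1 m2 g g'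
  generalize br τ r (β - γ + i - (j + 1)) = x1 at *
  generalize br τ r (γ - β + j - (i + 1)) = x2 at *
  generalize br τ r (β + γ + (i + j + 1)) = x3 at *
  generalize br τ r (β - γ - (j + 1)) = x4 at *
  generalize br τ r (γ - β - (i + 1)) = x5 at *
  generalize br τ r (γ - β - i + j) = x6 at *
  generalize brF τ r (β - γ - j) i = y1 at *
  generalize brF τ r (γ - β - i) j = y2 at *
  generalize brF τ r (β + γ) (i + j + 1) = y3 at *
  generalize brF τ r (α - γ) i = y4 at *
  generalize brF τ r (α - β) j = y5 at *
  generalize brF τ r (α + γ + (j + 1)) i = y6 at *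
  generalize brF τ r (α + β + (i + 1)) j = y7 at *
  generalize brF τ r 1 i = y8 at *
  generalize brF τ r 1 j = y9 at *
  generalize brF τ r 1 (i + j + 1) = y10 at *
  generalize br τ r (1 + (i + j + 1)) = z1 at *
  generalize br τ r (α + γ + (j + 1) + i) = z2 at *
  generalize br τ r (α + β + (i + 1) + j) = z3 at *
  generalize br τ r (1 + i) = z4 at *
  generalize br τ r (1 + j) = z5 at *
  generalize br τ r (α + β + i) = z6 at *
  generalize br τ r (α + γ + j) = z7 at *
  generalize br τ r (α + γ + i + 2 * j + 2) = z8 at *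
  generalize br τ r (α + β + 2 * i + j + 2) = z9 at *
  generalize br τ r (α - γ + i) = z10 at *
  generalize br τ r (α - β + j) = z11 at *
  field_simp
  linear_combination y4 * y5 * y6 * y7 * z10 * z11 * c

/-- The basis functions. -/
def hh (τ : ℂ) (r : ℝ) (z α : ℂ) (k : ℕ) : ℂ := brF τ r (α + z) k * brF τ r (α - z) k

lemma hh_zero (z α : ℂ) : hh τ r z α 0 = 1 := by simp [hh, brF_zero]

lemma hh_succ (z α : ℂ) (k : ℕ) :
    hh τ r z α (k + 1) = hh τ r z α k * (br τ r (α + k + z) * br τ r (α + k - z)) := by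
  simp only [hh, brF_succ]
  rw [show α + z + k = α + k + z by ring, show α - z + k = α + k - z by ring]
  ring

lemma hh_add (z α : ℂ) (m n : ℕ) :
    hh τ r z α (m + n) = hh τ r z α m * hh τ r z (α + m) n := by
  simp only [hh, brF_add]
  rw [show α + z + m = α + m + z by ring, show α - z + m = α + m - z by ring]
  ring

/-- one-step expansion -/
lemma step (hw : Wei τ r) (h1 : br τ r 1 ≠ 0) (z a b c : ℂ) (n1 : br τ r (b - c) ≠ 0)
    (n2 : br τ r (b + c) ≠ 0) :
    br τ r (a + z) * br τ r (a - z) =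
      br τ r (a - c) * br τ r (a + c) / (br τ r (b - c) * br τ r (b + c)) *
        (br τ r (b + z) * br τ r (b - z)) +
      br τ r (a - b) * br τ r (a + b) / (br τ r (c - b) * br τ r (b + c)) *
        (br τ r (c + z) * br τ r (c - z)) := by
  have t := three hw a b c z
  have o : br τ r (c - b) = - br τ r (b - c) := br_odd' hw h1 (by ring)
  rw [o]
  field_simp
  linear_combination t

lemma binom (hw : Wei τ r) (h1 : br τ r 1 ≠ 0) (z α β γ : ℂ) (g : Gen τ r β γ) (k : ℕ)
    (hF : brF τ r 1 k ≠ 0) :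
    hh τ r z α k = ∑ n ∈ range (k + 1), Cnk τ r k n α β γ * (hh τ r z β n * hh τ r z γ (k - n)) := by
  have g' := g.symm hw h1
  induction k with
  | zero => simp [hh_zero, Cnk, brF_zero]
  | succ k ih =>
    have hF' : brF τ r 1 k ≠ 0 := by
      rw [brF_succ] at hF; exact left_ne_zero_of_mul hF
    rw [hh_succ, ih hF', Finset.sum_mul]
    set B : ℕ → ℂ := fun n => br τ r (α - γ + n) * br τ r (α + γ + 2 * k - n) /
      (br τ r (β - γ + 2 * n - k) * br τ r (β + γ + k)) with hB
    set D : ℕ → ℂ := fun n => br τ r (α - β + k - n) * br τ r (α + β + k + n) /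
      (br τ r (γ - β + k - 2 * n) * br τ r (β + γ + k)) with hD
    have e : ∀ n ∈ range (k + 1), Cnk τ r k n α β γ * (hh τ r z β n * hh τ r z γ (k - n)) *
        (br τ r (α + k + z) * br τ r (α + k - z)) =
        Cnk τ r k n α β γ * B n * (hh τ r z β (n + 1) * hh τ r z γ (k - n)) +
        Cnk τ r k n α β γ * D n * (hh τ r z β n * hh τ r z γ (k + 1 - n)) := by
      intro n hn
      have hn' : n ≤ k := Nat.lt_succ_iff.1 (Finset.mem_range.1 hn)
      have e2 : ((k - n : ℕ) : ℂ) = (k : ℂ) - n := by push_cast [hn']; rfl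
      have n1 := g.m (β + n - (γ + ((k - n : ℕ) : ℂ))) (2 * n - k) (by rw [e2]; push_cast; ring)
      have n2 := g.p (β + n + (γ + ((k - n : ℕ) : ℂ))) k (by rw [e2]; push_cast; ring)
      rw [show k + 1 - n = (k - n) + 1 by omega, hh_succ, hh_succ,
        step hw h1 z (α + k) (β + n) (γ + ((k - n : ℕ) : ℂ)) n1 n2]
      simp only [hB, hD]
      rw [e2]
      rw [show α + k - (γ + ((k : ℂ) - n)) = α - γ + n by ring,
        show α + k + (γ + ((k : ℂ) - n)) = α + γ + 2 * k - n by ring,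
        show α + k - (β + n) = α - β + k - n by ring,
        show α + k + (β + n) = α + β + k + n by ring,
        show β + n - (γ + ((k : ℂ) - n)) = β - γ + 2 * n - k by ring,
        show β + n + (γ + ((k : ℂ) - n)) = β + γ + k by ring,
        show (γ + ((k : ℂ) - n)) - (β + n) = γ - β + k - 2 * n by ring]
      ring
    rw [Finset.sum_congr rfl e, Finset.sum_add_distrib, Finset.sum_range_succ,
      Finset.sum_range_succ' (fun n => Cnk τ r k n α β γ * D n *
        (hh τ r z β n * hh τ r z γ (k + 1 - n))),
      Finset.sum_range_succ _ (k + 1), Finset.sum_range_succ' _ k]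
    have a0 : Cnk τ r (k + 1) 0 α β γ = Cnk τ r k 0 α β γ * D 0 := by
      have := rec_zero hw h1 k hF α β γ g
      simp only [Nat.zero_add] at this
      rw [this]; simp [hD]
    have aL : Cnk τ r (k + 1) (k + 1) α β γ = Cnk τ r k k α β γ * B k := by
      have := rec_last k hF α β γ g
      simp only [add_zero] at this
      rw [this]; simp only [hB]
      rw [show α + γ + 2 * (k : ℂ) - k = α + γ + k by ring,
        show β - γ + 2 * (k : ℂ) - k = β - γ + k by ring]
    have aM : ∀ i ∈ range k, Cnk τ r (k + 1) (i + 1) α β γ = Cnk τ r k i α β γ * B i +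
        Cnk τ r k (i + 1) α β γ * D (i + 1) := by
      intro i hi
      obtain ⟨j, rfl⟩ := Nat.exists_eq_add_of_lt (Finset.mem_range.1 hi)
      have := rec_mid hw h1 i j hF α β γ g
      rw [show i + j + 1 + 1 = i + 1 + (j + 1) by ring, this]
      simp only [hB, hD]
      rw [show i + (j + 1) = i + j + 1 by ring, show i + 1 + j = i + j + 1 by ring]
      push_cast
      rw [show α + γ + 2 * ((i : ℂ) + j + 1) - i = α + γ + i + 2 * j + 2 by ring,
        show β - γ + 2 * (i : ℂ) - (i + j + 1) = β - γ + i - (j + 1) by ring,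
        show α - β + ((i : ℂ) + j + 1) - (i + 1) = α - β + j by ring,
        show α + β + ((i : ℂ) + j + 1) + (i + 1) = α + β + 2 * i + j + 2 by ring,
        show γ - β + ((i : ℂ) + j + 1) - 2 * (i + 1) = γ - β + j - (i + 1) by ring]
    have : ∀ i, k + 1 - (i + 1) = k - i := fun i => by omega
    simp only [this, Nat.sub_self, Nat.sub_zero]
    have aS : ∑ i ∈ range k, Cnk τ r (k + 1) (i + 1) α β γ *
        (hh τ r z β (i + 1) * hh τ r z γ (k - i)) =
        ∑ i ∈ range k, Cnk τ r k i α β γ * B i * (hh τ r z β (i + 1) * hh τ r z γ (k - i)) +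
        ∑ i ∈ range k, Cnk τ r k (i + 1) α β γ * D (i + 1) *
          (hh τ r z β (i + 1) * hh τ r z γ (k - i)) := by
      rw [← Finset.sum_add_distrib]
      apply Finset.sum_congr rfl
      intro i hi
      rw [aM i hi]; ring
    rw [aS, a0, aL]
    ring

lemma Rexp (hw : Wei τ r) (h1 : br τ r 1 ≠ 0) (z α β γ δ : ℂ) (g1 : Gen τ r γ β)
    (g2 : Gen τ r γ δ) (k : ℕ) (hF : brF τ r 1 k ≠ 0) (n : ℕ) (hn : n ≤ k) :
    hh τ r z α n * hh τ r z β (k - n) =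
      ∑ m ∈ range (k + 1), Rnm τ r k n m α β γ δ * (hh τ r z γ m * hh τ r z δ (k - m)) := by
  have hne : ∀ m ≤ k, brF τ r 1 m ≠ 0 := by
    intro m hm
    obtain ⟨d, hd⟩ := Nat.exists_eq_add_of_le hm
    rw [hd, brF_add] at hF
    exact left_ne_zero_of_mul hF
  have e2 : ((k - n : ℕ) : ℂ) = (k : ℂ) - n := by push_cast [hn]; rfl
  have ga : Gen τ r γ (β + k - n) := by
    have := g1.shift 0 (k - n); convert this using 1 <;> push_cast <;> ring
  rw [binom hw h1 z α γ (β + k - n) ga n (hne n hn), Finset.sum_mul]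
  have s1 : ∀ j ∈ range (n + 1), Cnk τ r n j α γ (β + k - n) *
      (hh τ r z γ j * hh τ r z (β + k - n) (n - j)) * hh τ r z β (k - n) =
      ∑ m ∈ Finset.Ico j (k + 1), Cnk τ r n j α γ (β + k - n) *
        Cnk τ r (k - j) (m - j) β (γ + j) δ * (hh τ r z γ m * hh τ r z δ (k - m)) := by
    intro j hj
    have hj' : j ≤ n := Nat.lt_succ_iff.1 (Finset.mem_range.1 hj)
    have t1 : hh τ r z β (k - n) * hh τ r z (β + k - n) (n - j) = hh τ r z β (k - j) := by
      rw [show k - j = (k - n) + (n - j) by omega, hh_add, e2, add_sub_assoc]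
    have gb : Gen τ r (γ + j) δ := by
      have := g2.shift j 0; convert this using 1 <;> push_cast <;> ring
    have t2 := binom hw h1 z β (γ + j) δ gb (k - j) (hne _ (by omega))
    rw [Finset.sum_Ico_eq_sum_range, show k + 1 - j = k - j + 1 by omega]
    calc _ = Cnk τ r n j α γ (β + k - n) * hh τ r z γ j *
          (hh τ r z β (k - n) * hh τ r z (β + k - n) (n - j)) := by ring
      _ = _ := by
        rw [t1, t2, Finset.mul_sum]
        apply Finset.sum_congr rfl
        intro i hi
        rw [Nat.add_sub_cancel_left, hh_add, show k - j - i = k - (j + i) by omega]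
        ring
  rw [Finset.sum_congr rfl s1]
  simp only [Rnm, Finset.sum_mul]
  apply Finset.sum_comm'
  intro x y
  simp only [Finset.mem_range, Finset.mem_Ico]
  omega

/-- triangularity -/
lemma indep (hw : Wei τ r) (h1 : br τ r 1 ≠ 0) (α β : ℂ) (g : Gen τ r α β)
    (g2 : ∀ s : ℤ, br τ r (2 * α + s) ≠ 0) (k : ℕ) (hF : brF τ r 1 k ≠ 0) (c : ℕ → ℂ)
    (h : ∀ z, ∑ l ∈ range (k + 1), c l * (hh τ r z α l * hh τ r z β (k - l)) = 0) :
    ∀ l ≤ k, c l = 0 := by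
  have g' := g.symm hw h1
  have hf : ∀ j < k, br τ r (1 + j) ≠ 0 := by
    intro j hj
    exact Finset.prod_ne_zero_iff.1 hF j (Finset.mem_range.2 hj)
  have h0 : br τ r 0 = 0 := by
    have := br_odd hw h1 0
    rw [neg_zero] at this
    linear_combination this / 2
  intro l
  induction l using Nat.strong_induction_on with
  | _ l ih =>
    intro hl
    have e := h (α + l)
    rw [Finset.sum_eq_single l] at e
    · rcases mul_eq_zero.1 e with h | h
      · exact h
      · exfalso
        revert h
        simp only [hh]
        refine mul_ne_zero (mul_ne_zero ?_ ?_) (mul_ne_zero ?_ ?_)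
        · exact brF_ne fun j _ => by
            have := g2 (l + j); convert this using 2; push_cast; ring
        · refine brF_ne fun j hj => ?_
          have := hf (l - 1 - j) (by omega)
          rw [br_odd' hw h1 (w := 1 + ((l - 1 - j : ℕ) : ℂ))]
          · exact neg_ne_zero.2 this
          · have : ((l - 1 - j : ℕ) : ℂ) = (l : ℂ) - 1 - j := by
              rw [Nat.sub_sub, Nat.cast_sub (by omega)]; push_cast; ring
            rw [this]; ring
        · exact g.Fp _ _ l (by push_cast; ring)
        · exact g'.Fm _ _ (-l) (by push_cast; ring)
    · intro b hb hbl
      rcases lt_or_gt_of_ne hbl with hlt | hgt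
      · rw [ih b hlt (by omega), zero_mul]
      · have : hh τ r (α + l) α b = 0 := by
          simp only [hh]
          have : brF τ r (α - (α + l)) b = 0 := by
            apply Finset.prod_eq_zero (Finset.mem_range.2 hgt)
            rw [← h0]; congr 1; ring
          rw [this, mul_zero]
        rw [this]; ring
    · intro hh; exact absurd (Finset.mem_range.2 (by omega)) hh

lemma generic_case (hw : Wei τ r) (h1 : br τ r 1 ≠ 0) (α β γ δ : ℂ) (g1 : Gen τ r γ β)
    (g2 : Gen τ r γ δ) (g3 : Gen τ r α δ) (g4 : Gen τ r α β)
    (g5 : ∀ s : ℤ, br τ r (2 * α + s) ≠ 0) (k : ℕ) (hF : brF τ r 1 k ≠ 0) (n l : ℕ) (hn : n ≤ k)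
    (hl : l ≤ k) :
    ∑ m ∈ range (k + 1), Rnm τ r k n m α β γ δ * Rnm τ r k m l γ δ α β =
      if n = l then 1 else 0 := by
  have key := indep hw h1 α β g4 g5 k hF
    (fun l => ∑ m ∈ range (k + 1), Rnm τ r k n m α β γ δ * Rnm τ r k m l γ δ α β -
      if n = l then 1 else 0) ?_ l hl
  · exact sub_eq_zero.1 key
  · intro z
    simp only [sub_mul, Finset.sum_sub_distrib]
    rw [sub_eq_zero]
    have : ∑ x ∈ range (k + 1), (if n = x then (1 : ℂ) else 0) *
        (hh τ r z α x * hh τ r z β (k - x)) = hh τ r z α n * hh τ r z β (k - n) := by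
      rw [Finset.sum_eq_single n]
      · simp
      · intro b _ hb; rw [if_neg (Ne.symm hb), zero_mul]
      · intro hh; exact absurd (Finset.mem_range.2 (by omega)) hh
    rw [this, Rexp hw h1 z α β γ δ g1 g2 k hF n hn]
    simp only [Finset.sum_mul]
    rw [Finset.sum_comm]
    apply Finset.sum_congr rfl
    intro m hm
    have hm' : m ≤ k := Nat.lt_succ_iff.1 (Finset.mem_range.1 hm)
    rw [Rexp hw h1 z γ δ α β g3 g4 k hF m hm', Finset.mul_sum]
    apply Finset.sum_congr rfl
    intro i _
    ring

end Alg
section Ana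

open Filter Topology

/-- `(q;q)_n`. -/
def PP (q : ℂ) (n : ℕ) : ℂ := ∏ i ∈ range n, (1 - q ^ (i + 1))

lemma PP_succ (q : ℂ) (n : ℕ) : PP q (n + 1) = PP q n * (1 - q ^ (n + 1)) := by
  simp [PP, Finset.prod_range_succ]

lemma one_sub_pow_ne {q : ℂ} (hq : ‖q‖ < 1) (i : ℕ) : 1 - q ^ (i + 1) ≠ 0 := by
  intro h
  have h2 : q ^ (i + 1) = 1 := by linear_combination -h
  have h3 : ‖q‖ ^ (i + 1) = 1 := by rw [← norm_pow, h2, norm_one]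
  have h4 : ‖q‖ ^ (i + 1) < 1 := pow_lt_one₀ (norm_nonneg _) hq (by omega)
  linarith

lemma PP_ne {q : ℂ} (hq : ‖q‖ < 1) (n : ℕ) : PP q n ≠ 0 :=
  Finset.prod_ne_zero_iff.2 fun i _ => one_sub_pow_ne hq i

/-- Rothe's identity -/
lemma rothe {q : ℂ} (hq : ‖q‖ < 1) (z : ℂ) (M : ℕ) :
    ∏ j ∈ range M, (1 + z * q ^ j) = ∑ k ∈ range (M + 1),
      q ^ (k.choose 2) * (PP q M / (PP q k * PP q (M - k))) * z ^ k := by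
  have hP := PP_ne hq
  induction M with
  | zero => simp [PP]
  | succ M ih =>
    rw [Finset.prod_range_succ, ih, mul_add, mul_one, Finset.sum_mul]
    rw [Finset.sum_range_succ' _ M,
      Finset.sum_range_succ (fun k => q ^ (k.choose 2) * (PP q M / (PP q k * PP q (M - k))) * z ^ k
        * (z * q ^ M)) M,
      Finset.sum_range_succ _ (M + 1), Finset.sum_range_succ' _ M]
    have aS : ∑ i ∈ range M, q ^ ((i + 1).choose 2) *
        (PP q (M + 1) / (PP q (i + 1) * PP q (M + 1 - (i + 1)))) * z ^ (i + 1) =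
        ∑ i ∈ range M, q ^ ((i + 1).choose 2) *
          (PP q M / (PP q (i + 1) * PP q (M - (i + 1)))) * z ^ (i + 1) +
        ∑ i ∈ range M, q ^ (i.choose 2) * (PP q M / (PP q i * PP q (M - i))) * z ^ i
          * (z * q ^ M) := by
      rw [← Finset.sum_add_distrib]
      apply Finset.sum_congr rfl
      intro i hi
      obtain ⟨j, rfl⟩ := Nat.exists_eq_add_of_lt (Finset.mem_range.1 hi)
      rw [show i + j + 1 + 1 - (i + 1) = j + 1 by omega, show i + j + 1 - (i + 1) = j by omega,
        show i + j + 1 - i = j + 1 by omega, show (i + 1).choose 2 = i + i.choose 2 by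
          rw [Nat.choose_succ_succ' i 1, Nat.choose_one_right], PP_succ q (i + j + 1), PP_succ q i,
        PP_succ q j]
      have h1 := hP i
      have h2 := hP j
      have h3 := hP (i + j + 1)
      have h4 := one_sub_pow_ne hq i
      have h5 := one_sub_pow_ne hq j
      have e : q ^ i * ((1 - q ^ (j + 1)) + q ^ (j + 1) * (1 - q ^ (i + 1)))
        = q ^ i * (1 - q ^ (i + j + 1 + 1)) := by ring
      field_simp
      ring
    have a0 : PP q (M + 1) / (PP q 0 * PP q (M + 1 - 0)) = PP q M / (PP q 0 * PP q (M - 0)) := by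
      simp only [Nat.sub_zero]
      have := hP (M + 1); have := hP M; have := hP 0
      field_simp
    have aL : q ^ ((M + 1).choose 2) * (PP q (M + 1) / (PP q (M + 1) * PP q (M + 1 - (M + 1)))) *
        z ^ (M + 1) = q ^ (M.choose 2) * (PP q M / (PP q M * PP q (M - M))) * z ^ M
          * (z * q ^ M) := by
      rw [show (M + 1).choose 2 = M + M.choose 2 by
          rw [Nat.choose_succ_succ' M 1, Nat.choose_one_right]]
      simp only [Nat.sub_self]
      have := hP (M + 1); have := hP M; have := hP 0
      field_simp
      ring
    rw [aS, a0, aL]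
    ring

lemma choose_two_cast (k : ℕ) : ((k.choose 2 : ℕ) : ℂ) = (k : ℂ) * (k - 1) / 2 := by
  rw [Nat.cast_choose_two]

/-- theta series term -/
def tt (v w : ℂ) (m : ℤ) : ℂ :=
  cexp ((v + Real.pi * I) * m + w * ((m : ℂ) * (m - 1)) / 2)

lemma norm_exp_lt {w : ℂ} (hw : w.re < 0) : ‖cexp w‖ < 1 := by
  rw [Complex.norm_exp]; exact Real.exp_lt_one_iff.2 hw

lemma exp_pi (v : ℂ) : cexp (v + Real.pi * I) = - cexp v := by
  rw [Complex.exp_add, Complex.exp_pi_mul_I]; ring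

lemma finite_triple {w : ℂ} (hw : w.re < 0) (v : ℂ) (N : ℕ) :
    ∏ j ∈ range N, ((1 - cexp v * cexp w ^ j) * (1 - cexp w ^ (j + 1) / cexp v)) =
      ∑ k ∈ range (2 * N + 1), PP (cexp w) (2 * N) / (PP (cexp w) k * PP (cexp w) (2 * N - k)) *
        tt v w ((k : ℤ) - N) := by
  have R := rothe (norm_exp_lt hw) (cexp (v + Real.pi * I - N * w)) (2 * N)
  set K : ℂ := cexp (-(v + Real.pi * I) * N + w * ((N : ℂ) * (N + 1)) / 2) with hK
  have hK' : K = ∏ j ∈ range N, cexp (-(v + Real.pi * I) + w * (j + 1)) := by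
    rw [← Complex.exp_sum, hK]
    congr 1
    clear R
    clear hK K
    induction N with
    | zero => simp
    | succ n ih => rw [Finset.sum_range_succ, ← ih]; push_cast; ring
  have hA : (∏ j ∈ range (2 * N), (1 + cexp (v + Real.pi * I - N * w) * cexp w ^ j)) * K =
      ∏ j ∈ range N, ((1 - cexp v * cexp w ^ j) * (1 - cexp w ^ (j + 1) / cexp v)) := by
    rw [two_mul, Finset.prod_range_add, Finset.prod_mul_distrib, hK',
      ← Finset.prod_range_reflect (fun j => 1 + cexp (v + Real.pi * I - N * w) * cexp w ^ j) N]
    rw [mul_comm (∏ j ∈ range N, _), mul_assoc, ← Finset.prod_mul_distrib]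
    congr 1
    · apply Finset.prod_congr rfl
      intro j _
      rw [← Complex.exp_nat_mul, ← Complex.exp_nat_mul, ← Complex.exp_add, ← Complex.exp_add,
        show v + Real.pi * I - N * w + ((N + j : ℕ) : ℂ) * w = (v + j * w) + Real.pi * I by
          push_cast; ring, exp_pi]
      ring
    · apply Finset.prod_congr rfl
      intro j hj
      have hj' : j < N := Finset.mem_range.1 hj
      have : ((N - 1 - j : ℕ) : ℂ) = (N : ℂ) - 1 - j := by
        rw [Nat.sub_sub, Nat.cast_sub (by omega)]; push_cast; ring
      rw [← Complex.exp_nat_mul, ← Complex.exp_nat_mul, ← Complex.exp_add, ← Complex.exp_sub,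
        add_mul, one_mul, ← Complex.exp_add, this]
      rw [show v + Real.pi * I - N * w + ((N : ℂ) - 1 - j) * w + (-(v + Real.pi * I) + w * (j + 1))
        = 0 by ring, Complex.exp_zero]
      rw [show -(v + Real.pi * I) + w * (j + 1) = (((j + 1 : ℕ) : ℂ) * w - v) + Real.pi * I
        - 2 * Real.pi * I by push_cast; ring, Complex.exp_sub, Complex.exp_two_pi_mul_I, exp_pi]
      ring
  rw [← hA, R, Finset.sum_mul]
  apply Finset.sum_congr rfl
  intro k _
  rw [hK, tt, ← Complex.exp_nat_mul, ← Complex.exp_nat_mul, choose_two_cast]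
  have : cexp ((k : ℂ) * (k - 1) / 2 * w) * cexp (k * (v + Real.pi * I - N * w)) *
      cexp (-(v + Real.pi * I) * N + w * ((N : ℂ) * (N + 1)) / 2) =
      cexp ((v + Real.pi * I) * (((k : ℤ) - N : ℤ) : ℂ) +
        w * ((((k : ℤ) - N : ℤ) : ℂ) * ((((k : ℤ) - N : ℤ) : ℂ) - 1)) / 2) := by
    rw [← Complex.exp_add, ← Complex.exp_add]
    congr 1
    push_cast
    ring
  rw [← this]
  ring

lemma tt_eq (v w : ℂ) (m : ℤ) : tt v w m =
    jacobiTheta₂_term m ((v + Real.pi * I - w / 2) / (2 * Real.pi * I)) (w / (2 * Real.pi * I)) := by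
  rw [tt, jacobiTheta₂_term]
  congr 1
  have h1 : (Real.pi : ℂ) ≠ 0 := by exact_mod_cast Real.pi_ne_zero
  have h2 := Complex.I_ne_zero
  field_simp
  ring

lemma im_div {w : ℂ} (hw : w.re < 0) : 0 < (w / (2 * Real.pi * I)).im := by
  have : w / (2 * Real.pi * I) = ((1 / (2 * Real.pi) : ℝ) : ℂ) * (- (w * I)) := by
    have h1 : (Real.pi : ℂ) ≠ 0 := by exact_mod_cast Real.pi_ne_zero
    have h2 := Complex.I_ne_zero
    push_cast
    field_simp
    linear_combination (w) * Complex.I_sq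
  rw [this, Complex.im_ofReal_mul]
  have : 0 < 1 / (2 * Real.pi) := by positivity
  refine mul_pos this ?_
  simpa using hw

lemma tt_summable {w : ℂ} (hw : w.re < 0) (v : ℂ) : Summable (tt v w) := by
  have := (summable_jacobiTheta₂_term_iff ((v + Real.pi * I - w / 2) / (2 * Real.pi * I))
    (w / (2 * Real.pi * I))).2 (im_div hw)
  exact this.congr fun m => (tt_eq v w m).symm

lemma norm_summable_pow {q : ℂ} (hq : ‖q‖ < 1) : Summable fun j : ℕ => ‖q ^ j‖ := by
  simp only [norm_pow]
  exact summable_geometric_of_lt_one (norm_nonneg _) hq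

lemma norm_summable_pow' {q : ℂ} (hq : ‖q‖ < 1) : Summable fun j : ℕ => ‖q ^ (j + 1)‖ := by
  have e : (fun j : ℕ => ‖q ^ (j + 1)‖) = fun j : ℕ => ‖q ^ j‖ * ‖q‖ := by
    funext j; rw [pow_succ, norm_mul]
  rw [e]; exact (norm_summable_pow hq).mul_right _

lemma mult_a {q : ℂ} (hq : ‖q‖ < 1) (z : ℂ) : Multipliable fun j : ℕ => (1 - z * q ^ j) := by
  have : Multipliable fun j : ℕ => (1 + -(z * q ^ j)) := by
    apply multipliable_one_add_of_summable
    simp only [norm_neg, norm_mul]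
    exact (norm_summable_pow hq).mul_left _
  simpa [sub_eq_add_neg] using this

lemma PP_tendsto {q : ℂ} (hq : ‖q‖ < 1) : ∃ L : ℂ, L ≠ 0 ∧ Tendsto (PP q) atTop (𝓝 L) := by
  refine ⟨∏' i : ℕ, (1 + -(q ^ (i + 1))), ?_, ?_⟩
  · apply tprod_one_add_ne_zero_of_summable
    · intro i; simpa [sub_eq_add_neg] using one_sub_pow_ne hq i
    · simp only [norm_neg]
      exact norm_summable_pow' hq
  · have : Multipliable fun i : ℕ => (1 + -(q ^ (i + 1))) := by
      apply multipliable_one_add_of_summable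
      simp only [norm_neg]
      exact norm_summable_pow' hq
    have h := this.hasProd.tendsto_prod_nat
    refine h.congr fun n => ?_
    simp [PP, sub_eq_add_neg]

lemma triple {w : ℂ} (hw : w.re < 0) (v : ℂ) :
    Theta (cexp w) (cexp v) = ∑' m : ℤ, tt v w m := by
  have hq := norm_exp_lt hw
  set q := cexp w with hqd
  have hP := PP_ne hq
  obtain ⟨L, hL, hlim⟩ := PP_tendsto hq
  -- product side
  have m1 := mult_a hq (cexp v)
  have m2 : Multipliable fun j : ℕ => (1 - q ^ (j + 1) / cexp v) := by
    have e : (fun j : ℕ => (1 - q ^ (j + 1) / cexp v)) = fun j : ℕ => 1 - q / cexp v * q ^ j := by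
      funext j; rw [pow_succ]; ring
    rw [e]; exact mult_a hq _
  have m3 : Multipliable fun j : ℕ => (1 - q ^ (j + 1)) := by
    have e : (fun j : ℕ => (1 - q ^ (j + 1))) = fun j : ℕ => 1 - q * q ^ j := by
      funext j; rw [pow_succ]; ring
    rw [e]; exact mult_a hq _
  have hp := ((m1.mul m2).mul m3).hasProd.tendsto_prod_nat
  -- coefficients
  let co : ℕ → ℤ → ℂ := fun N m => if -(N : ℤ) ≤ m ∧ m ≤ N then
    PP q N * (PP q (2 * N) / (PP q ((N : ℤ) + m).toNat * PP q ((N : ℤ) - m).toNat)) else 0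
  have hfin : ∀ N : ℕ, ∏ j ∈ range N, ((1 - cexp v * q ^ j) * (1 - q ^ (j + 1) / cexp v) *
      (1 - q ^ (j + 1))) = ∑' m : ℤ, co N m * tt v w m := by
    intro N
    rw [Finset.prod_mul_distrib, finite_triple hw v N, Finset.sum_mul]
    rw [tsum_eq_sum (s := (range (2 * N + 1)).image (fun k : ℕ => (k : ℤ) - N))]
    · rw [Finset.sum_image (by intro a _ b _ h; simpa using h)]
      apply Finset.sum_congr rfl
      intro k hk
      have hk' : k < 2 * N + 1 := Finset.mem_range.1 hk
      simp only [co]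
      rw [if_pos (by omega), show ((N : ℤ) + ((k : ℤ) - N)).toNat = k by omega,
        show ((N : ℤ) - ((k : ℤ) - N)).toNat = 2 * N - k by omega]
      have : ∏ i ∈ range N, (1 - q ^ (i + 1)) = PP q N := rfl
      rw [this]
      ring
    · intro m hm
      simp only [co]
      rw [if_neg, zero_mul]
      intro h
      apply hm
      rw [Finset.mem_image]
      exact ⟨((N : ℤ) + m).toNat, Finset.mem_range.2 (by omega), by omega⟩
  have hs : Tendsto (fun N => ∑' m : ℤ, co N m * tt v w m) atTop (𝓝 (∑' m : ℤ, tt v w m)) := by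
    obtain ⟨A, hA⟩ := hlim.norm.bddAbove_range
    obtain ⟨B, hB⟩ := (hlim.inv₀ hL).norm.bddAbove_range
    have hA' : ∀ n, ‖PP q n‖ ≤ A := fun n => hA ⟨n, rfl⟩
    have hB' : ∀ n, ‖(PP q n)⁻¹‖ ≤ B := fun n => hB ⟨n, rfl⟩
    have hA0 : 0 ≤ A := (norm_nonneg _).trans (hA' 0)
    have hB0 : 0 ≤ B := (norm_nonneg _).trans (hB' 0)
    apply tendsto_tsum_of_dominated_convergence (bound := fun m => A * (A * (B * B)) * ‖tt v w m‖)
    · exact (tt_summable hw v).norm.mul_left _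
    · intro m
      have h1 : Tendsto (fun N : ℕ => ((N : ℤ) + m).toNat) atTop atTop := by
        apply tendsto_atTop.2
        intro b
        filter_upwards [eventually_ge_atTop (b + m.natAbs)] with N hN
        omega
      have h2 : Tendsto (fun N : ℕ => ((N : ℤ) - m).toNat) atTop atTop := by
        apply tendsto_atTop.2
        intro b
        filter_upwards [eventually_ge_atTop (b + m.natAbs)] with N hN
        omega
      have h3 : Tendsto (fun N : ℕ => 2 * N) atTop atTop := by
        apply tendsto_atTop.2
        intro b
        filter_upwards [eventually_ge_atTop b] with N hN
        omega
      have h4 : Tendsto (fun N => PP q N * (PP q (2 * N) /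
          (PP q ((N : ℤ) + m).toNat * PP q ((N : ℤ) - m).toNat)) * tt v w m) atTop
          (𝓝 (L * (L / (L * L)) * tt v w m)) :=
        (hlim.mul ((hlim.comp h3).div ((hlim.comp h1).mul (hlim.comp h2))
          (mul_ne_zero hL hL))).mul_const _
      have h5 : L * (L / (L * L)) * tt v w m = tt v w m := by field_simp
      rw [h5] at h4
      refine h4.congr' ?_
      filter_upwards [eventually_ge_atTop m.natAbs] with N hN
      simp only [co]
      rw [if_pos (by omega)]
    · refine Eventually.of_forall fun N m => ?_
      rw [norm_mul]
      gcongr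
      simp only [co]
      split_ifs
      · rw [div_eq_mul_inv, mul_inv, norm_mul, norm_mul, norm_mul]
        gcongr <;> first | exact hA' _ | exact hB' _
      · rw [norm_zero]; positivity
  have := hp.congr hfin
  exact tendsto_nhds_unique this hs

end Ana
section Ana2

open Filter Topology

/-- the constant `-iπ/(rτ)` -/
def kap (τ : ℂ) (r : ℝ) : ℂ := -Complex.I * (Real.pi : ℂ) / ((r : ℂ) * τ)

lemma xp_kap (τ : ℂ) (r : ℝ) (s : ℂ) : xp τ r s = cexp (kap τ r * s) := by
  rw [xp, kap]; congr 1; ring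

lemma kap_re {τ : ℂ} {r : ℝ} (hτ : 0 < τ.im) (hr : 0 < r) : (kap τ r).re < 0 := by
  have e : kap τ r = ((Real.pi / r : ℝ) : ℂ) * (-I * τ⁻¹) := by
    rw [kap]; push_cast; rw [div_eq_mul_inv, mul_inv]; ring
  rw [e, Complex.re_ofReal_mul]
  have h0 : τ ≠ 0 := by rintro rfl; simp at hτ
  have h1 : 0 < Complex.normSq τ := Complex.normSq_pos.2 h0
  have : (-I * τ⁻¹).re = -(τ.im / Complex.normSq τ) := by
    simp [Complex.inv_im, neg_div]
  rw [this]
  have h2 : 0 < τ.im / Complex.normSq τ := by positivity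
  have h3 : 0 < Real.pi / r := by positivity
  nlinarith [mul_pos h2 h3]

lemma kap_w {τ : ℂ} {r : ℝ} (hτ : 0 < τ.im) (hr : 0 < r) :
    (kap τ r * (2 * (r : ℂ))).re < 0 := by
  have e : kap τ r * (2 * (r : ℂ)) = ((2 * r : ℝ) : ℂ) * kap τ r := by push_cast; ring
  rw [e, Complex.re_ofReal_mul]
  have := kap_re hτ hr
  nlinarith

lemma br_tt {τ : ℂ} {r : ℝ} (hτ : 0 < τ.im) (hr : 0 < r) (u : ℂ) :
    br τ r u = cexp (kap τ r * (u ^ 2 / (r : ℂ) - u)) *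
      ∑' m : ℤ, tt (kap τ r * (2 * u)) (kap τ r * (2 * (r : ℂ))) m := by
  rw [br, xp_kap, xp_kap, xp_kap, triple (kap_w hτ hr)]

lemma br_diff {τ : ℂ} {r : ℝ} (hτ : 0 < τ.im) (hr : 0 < r) : Differentiable ℂ (br τ r) := by
  have e : br τ r = fun u => cexp (kap τ r * (u ^ 2 / (r : ℂ) - u)) *
      jacobiTheta₂ ((kap τ r * (2 * u) + Real.pi * I - kap τ r * (2 * (r : ℂ)) / 2) /
        (2 * Real.pi * I)) (kap τ r * (2 * (r : ℂ)) / (2 * Real.pi * I)) := by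
    funext u
    rw [br_tt hτ hr]
    congr 1
    rw [jacobiTheta₂]
    exact tsum_congr fun m => tt_eq _ _ m
  rw [e]
  intro u
  apply DifferentiableAt.mul
  · fun_prop
  · have h := differentiableAt_jacobiTheta₂_fst
      ((kap τ r * (2 * u) + Real.pi * I - kap τ r * (2 * (r : ℂ)) / 2) / (2 * Real.pi * I))
      (im_div (kap_w hτ hr))
    exact DifferentiableAt.comp u
      (f := fun u => (kap τ r * (2 * u) + Real.pi * I - kap τ r * (2 * (r : ℂ)) / 2) /
        (2 * Real.pi * I)) h (by fun_prop)

lemma gauss {c : ℂ} (hc : c.re < 0) (d e : ℂ) :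
    Summable fun m : ℤ => ‖cexp (c * (m : ℂ) ^ 2 + d * m + e)‖ := by
  have h2 : (c * 2).re < 0 := by simp; linarith
  have := ((tt_summable h2 (d + c - Real.pi * I)).mul_left (cexp e)).norm
  refine this.congr fun m => ?_
  rw [tt, ← Complex.exp_add]
  congr 2
  ring

/-- even theta -/
def Ee (τ : ℂ) (r : ℝ) (a : ℂ) (i : ℤ) : ℂ := cexp (2 * kap τ r * (a + r * i) ^ 2 / r)

/-- odd theta -/
def Oo (τ : ℂ) (r : ℝ) (a : ℂ) (i : ℤ) : ℂ := cexp (2 * kap τ r * (a + r * i + r / 2) ^ 2 / r)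

/-- bracket series -/
def sT (τ : ℂ) (r : ℝ) (u : ℂ) (n : ℤ) : ℂ :=
  cexp (Real.pi * I * n + kap τ r * (u + r * n - r / 2) ^ 2 / r - kap τ r * r / 4)

lemma half_w {τ : ℂ} {r : ℝ} (hτ : 0 < τ.im) (hr : 0 < r) :
    (kap τ r * (r : ℂ)).re < 0 := by
  have := kap_w hτ hr
  rw [show kap τ r * (2 * (r : ℂ)) = kap τ r * (r : ℂ) * 2 by ring] at this
  simp at this ⊢
  linarith

lemma Ee_sum {τ : ℂ} {r : ℝ} (hτ : 0 < τ.im) (hr : 0 < r) (a : ℂ) :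
    Summable fun i => ‖Ee τ r a i‖ := by
  have h : (r : ℂ) ≠ 0 := by exact_mod_cast hr.ne'
  have hw := kap_w hτ hr
  refine (gauss hw (4 * kap τ r * a) (2 * kap τ r * a ^ 2 / r)).congr fun m => ?_
  rw [Ee]; congr 2; field_simp; ring

lemma Oo_sum {τ : ℂ} {r : ℝ} (hτ : 0 < τ.im) (hr : 0 < r) (a : ℂ) :
    Summable fun i => ‖Oo τ r a i‖ := by
  refine (Ee_sum hτ hr (a + r / 2)).congr fun m => ?_
  rw [Ee, Oo]; congr 2; ring

lemma sT_sum {τ : ℂ} {r : ℝ} (hτ : 0 < τ.im) (hr : 0 < r) (u : ℂ) :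
    Summable fun i => ‖sT τ r u i‖ := by
  have h : (r : ℂ) ≠ 0 := by exact_mod_cast hr.ne'
  refine (gauss (half_w hτ hr) (Real.pi * I + 2 * kap τ r * (u - r / 2))
    (kap τ r * (u - r / 2) ^ 2 / r - kap τ r * r / 4)).congr fun m => ?_
  rw [sT]; congr 2; field_simp; ring

lemma br_sT {τ : ℂ} {r : ℝ} (hτ : 0 < τ.im) (hr : 0 < r) (u : ℂ) :
    br τ r u = ∑' n : ℤ, sT τ r u n := by
  have h : (r : ℂ) ≠ 0 := by exact_mod_cast hr.ne'
  rw [br_tt hτ hr, ← tsum_mul_left]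
  refine tsum_congr fun m => ?_
  rw [tt, sT, ← Complex.exp_add]; congr 1; field_simp; ring

/-- reindexing -/
def rix : (ℤ × ℤ) ⊕ (ℤ × ℤ) → ℤ × ℤ
  | Sum.inl (i, j) => (i + j + 1, i - j)
  | Sum.inr (i, j) => (i + j + 1, i - j + 1)

lemma rix_bij : Function.Bijective rix := by
  constructor
  · rintro (⟨i, j⟩ | ⟨i, j⟩) (⟨i', j'⟩ | ⟨i', j'⟩) h <;> simp only [rix, Prod.mk.injEq] at h
    · congr 2 <;> omega
    · omega
    · omega
    · congr 2 <;> omega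
  · rintro ⟨m, n⟩
    rcases Int.even_or_odd' (m + n) with ⟨c, hc | hc⟩
    · exact ⟨Sum.inr (c - 1, m - c), by simp only [rix, Prod.mk.injEq]; omega⟩
    · exact ⟨Sum.inl (c, m - 1 - c), by simp only [rix, Prod.mk.injEq]; omega⟩

lemma exp_odd (i : ℤ) : cexp (Real.pi * I * ((2 * i + 1 : ℤ) : ℂ)) = -1 := by
  rw [show Real.pi * I * ((2 * i + 1 : ℤ) : ℂ) = i * (2 * Real.pi * I) + Real.pi * I by
    push_cast; ring, exp_pi, Complex.exp_int_mul_two_pi_mul_I]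

lemma exp_even (i : ℤ) : cexp (Real.pi * I * ((2 * i : ℤ) : ℂ)) = 1 := by
  rw [show Real.pi * I * ((2 * i : ℤ) : ℂ) = i * (2 * Real.pi * I) by
    push_cast; ring, Complex.exp_int_mul_two_pi_mul_I]

lemma wei {τ : ℂ} {r : ℝ} (hτ : 0 < τ.im) (hr : 0 < r) : Wei τ r := by
  have h : (r : ℂ) ≠ 0 := by exact_mod_cast hr.ne'
  refine ⟨fun a => cexp (-(kap τ r * r / 2)) * ∑' i, Oo τ r a i, fun a => ∑' i, Ee τ r a i, ?_⟩
  intro a b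
  rw [br_sT hτ hr, br_sT hτ hr,
    tsum_mul_tsum_of_summable_norm (sT_sum hτ hr _) (sT_sum hτ hr _),
    ← Equiv.tsum_eq (Equiv.ofBijective rix rix_bij)]
  have e1 : ∀ z : ℤ × ℤ, sT τ r (a + b) (rix (Sum.inl z)).1 * sT τ r (a - b) (rix (Sum.inl z)).2 =
      -(cexp (-(kap τ r * r / 2))) * (Ee τ r a z.1 * Oo τ r b z.2) := by
    rintro ⟨i, j⟩
    rw [neg_mul, ← neg_one_mul, ← exp_odd i]
    simp only [rix, sT, Ee, Oo, ← Complex.exp_add]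
    congr 1; push_cast; field_simp; ring
  have e2 : ∀ z : ℤ × ℤ, sT τ r (a + b) (rix (Sum.inr z)).1 * sT τ r (a - b) (rix (Sum.inr z)).2 =
      (cexp (-(kap τ r * r / 2))) * (Oo τ r a z.1 * Ee τ r b z.2) := by
    rintro ⟨i, j⟩
    rw [← one_mul (cexp (-(kap τ r * r / 2))), ← exp_even (i + 1)]
    simp only [rix, sT, Ee, Oo, ← Complex.exp_add]
    congr 1; push_cast; field_simp; ring
  have s1 := (summable_mul_of_summable_norm (Ee_sum hτ hr a) (Oo_sum hτ hr b)).hasSum.mul_left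
    (-(cexp (-(kap τ r * r / 2))))
  have s2 := (summable_mul_of_summable_norm (Oo_sum hτ hr a) (Ee_sum hτ hr b)).hasSum.mul_left
    (cexp (-(kap τ r * r / 2)))
  rw [← tsum_mul_tsum_of_summable_norm (Ee_sum hτ hr a) (Oo_sum hτ hr b)] at s1
  rw [← tsum_mul_tsum_of_summable_norm (Oo_sum hτ hr a) (Ee_sum hτ hr b)] at s2
  have s3 := HasSum.sum (f := fun c => sT τ r (a + b) (rix c).1 * sT τ r (a - b) (rix c).2)
    (s1.congr_fun e1) (s2.congr_fun e2)
  refine (HasSum.tsum_eq s3).trans ?_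
  ring

end Ana2
section Fin

open Filter Topology

lemma brF_cont {τ : ℂ} {r : ℝ} (hb : Continuous (br τ r)) {u : ℂ → ℂ} (hu : Continuous u) (n : ℕ) :
    Continuous fun t => brF τ r (u t) n := by
  unfold brF
  exact continuous_finsetProd _ fun j _ => hb.comp (hu.add continuous_const)

lemma Cnk_cont {τ : ℂ} {r : ℝ} (hb : Continuous (br τ r)) {a b c : ℂ → ℂ} (ha : Continuous a)
    (hB : Continuous b) (hc : Continuous c) (k n : ℕ) (t : ℂ)
    (h : CdenomNZ τ r k n (b t) (c t)) :
    ContinuousAt (fun t => Cnk τ r k n (a t) (b t) (c t)) t := by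
  obtain ⟨-, -, h3, h4, h5⟩ := h
  unfold Cnk
  apply ContinuousAt.div
  · apply Continuous.continuousAt
    apply continuous_const.mul
    refine Continuous.mul (Continuous.mul (Continuous.mul ?_ ?_) ?_) ?_ <;>
      exact brF_cont hb (by fun_prop) _
  · apply Continuous.continuousAt
    refine Continuous.mul (Continuous.mul ?_ ?_) ?_ <;>
      exact brF_cont hb (by fun_prop) _
  · exact mul_ne_zero (mul_ne_zero h3 h4) h5

lemma Rnm_cont {τ : ℂ} {r : ℝ} (hb : Continuous (br τ r)) {a b c d : ℂ → ℂ} (ha : Continuous a)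
    (hB : Continuous b) (hc : Continuous c) (hd : Continuous d) (k n m : ℕ) (t : ℂ)
    (h : RdenomNZ τ r k n m (b t) (c t) (d t)) :
    ContinuousAt (fun t => Rnm τ r k n m (a t) (b t) (c t) (d t)) t := by
  unfold Rnm
  apply tendsto_finsetSum
  intro j hj
  have hj' : j ≤ min n m := Nat.lt_succ_iff.1 (Finset.mem_range.1 hj)
  obtain ⟨h1, h2⟩ := h j hj'
  apply ContinuousAt.mul
  · exact Cnk_cont hb (a := a) (b := c) (c := fun t => b t + (k : ℂ) - (n : ℂ)) ha hc
      (by fun_prop) n j t h1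
  · exact Cnk_cont hb (a := b) (b := fun t => c t + (j : ℂ)) (c := d) hB (by fun_prop) hd _ _ t h2

lemma dense_ne {τ : ℂ} {r : ℝ} (hb : Differentiable ℂ (br τ r)) (h1 : br τ r 1 ≠ 0) (e c : ℂ)
    (hc : c ≠ 0) : Dense {t : ℂ | br τ r (e + c * t) ≠ 0} := by
  have hd : Differentiable ℂ fun t => br τ r (e + c * t) := hb.comp (by fun_prop)
  have ha : AnalyticOnNhd ℂ (fun t => br τ r (e + c * t)) Set.univ := fun x _ => hd.analyticAt x
  have h0 : AnalyticOnNhd ℂ (fun _ : ℂ => (0 : ℂ)) Set.univ := fun x _ => analyticAt_const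
  intro t
  rw [mem_closure_iff_frequently]
  by_contra hn
  rw [Filter.not_frequently] at hn
  have : (fun t => br τ r (e + c * t)) =ᶠ[𝓝 t] fun _ => 0 := by
    filter_upwards [hn] with x hx
    simpa using hx
  have h2 := AnalyticOnNhd.eq_of_eventuallyEq ha h0 this
  have h3 := congrFun h2 ((1 - e) / c)
  apply h1
  simpa [mul_div_cancel₀ _ hc] using h3

/-- directions -/
def dirs (α β γ δ : ℂ) : Fin 9 → ℂ × ℂ :=
  ![(γ - β, 7), (γ + β, 13), (γ - δ, -20), (γ + δ, 40), (α - δ, -29), (α + δ, 31), (α - β, -2),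
    (α + β, 4), (2 * α, 2)]

lemma dirs_ne (α β γ δ : ℂ) (i : Fin 9) : (dirs α β γ δ i).2 ≠ 0 := by
  fin_cases i <;> simp [dirs]

lemma dense_all {τ : ℂ} {r : ℝ} (hb : Differentiable ℂ (br τ r)) (h1 : br τ r 1 ≠ 0)
    (α β γ δ : ℂ) : Dense {t : ℂ | ∀ (p : Fin 9 × ℤ),
      br τ r (((dirs α β γ δ p.1).1 + (p.2 : ℂ)) + (dirs α β γ δ p.1).2 * t) ≠ 0} := by
  rw [Set.ofPred_forall]
  apply dense_iInter_of_isOpen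
  · intro p
    apply isOpen_ne_fun (hb.continuous.comp (by fun_prop)) continuous_const
  · intro p
    exact dense_ne hb h1 _ _ (dirs_ne α β γ δ p.1)

lemma biorth_main (τ : ℂ) (r : ℝ) (hτ : 0 < τ.im) (hr : 0 < r)
    (k n l : ℕ) (hn : n ≤ k) (hl : l ≤ k) (α β γ δ : ℂ)
    (hd1 : ∀ m ≤ k, RdenomNZ τ r k n m β γ δ)
    (hd2 : ∀ m ≤ k, RdenomNZ τ r k m l δ α β) :
    ∑ m ∈ Finset.range (k + 1), Rnm τ r k n m α β γ δ * Rnm τ r k m l γ δ α β =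
      if n = l then 1 else 0 := by
  rcases Nat.eq_zero_or_pos k with rfl | hk
  · obtain rfl : n = 0 := by omega
    obtain rfl : l = 0 := by omega
    simp [Rnm, Cnk, brF]
  have hF : brF τ r 1 k ≠ 0 := by
    have := (hd1 k le_rfl 0 (Nat.zero_le _)).2.1
    simpa using this
  have h1 : br τ r 1 ≠ 0 := by
    unfold brF at hF
    have := Finset.prod_ne_zero_iff.1 hF 0 (Finset.mem_range.2 hk)
    simpa using this
  have hb := br_diff hτ hr
  have hw := wei hτ hr
  have hD := dense_all hb h1 α β γ δ
  set D := {t : ℂ | ∀ (p : Fin 9 × ℤ),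
      br τ r (((dirs α β γ δ p.1).1 + (p.2 : ℂ)) + (dirs α β γ δ p.1).2 * t) ≠ 0} with hDd
  let F : ℂ → ℂ := fun t => ∑ m ∈ Finset.range (k + 1),
    Rnm τ r k n m (α + t) (β + 3 * t) (γ + 10 * t) (δ + 30 * t) *
      Rnm τ r k m l (γ + 10 * t) (δ + 30 * t) (α + t) (β + 3 * t)
  have hFc : ContinuousAt F 0 := by
    apply tendsto_finsetSum
    intro m hm
    have hm' : m ≤ k := Nat.lt_succ_iff.1 (Finset.mem_range.1 hm)
    apply ContinuousAt.mul
    · exact Rnm_cont hb.continuous (a := fun t => α + t) (b := fun t => β + 3 * t)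
        (c := fun t => γ + 10 * t) (d := fun t => δ + 30 * t) (by fun_prop) (by fun_prop)
        (by fun_prop) (by fun_prop) k n m 0 (by simpa using hd1 m hm')
    · exact Rnm_cont hb.continuous (a := fun t => γ + 10 * t) (b := fun t => δ + 30 * t)
        (c := fun t => α + t) (d := fun t => β + 3 * t) (by fun_prop) (by fun_prop)
        (by fun_prop) (by fun_prop) k m l 0 (by simpa using hd2 m hm')
  have hFD : ∀ t ∈ D, F t = if n = l then 1 else 0 := by
    intro t ht
    have key : ∀ (i : Fin 9) (s : ℤ) (x : ℂ),
        x = ((dirs α β γ δ i).1 + (s : ℂ)) + (dirs α β γ δ i).2 * t → br τ r x ≠ 0 := by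
      intro i s x hx
      rw [hx]; exact ht (i, s)
    refine generic_case hw h1 (α + t) (β + 3 * t) (γ + 10 * t) (δ + 30 * t) ⟨fun s => ?_, fun s => ?_⟩
      ⟨fun s => ?_, fun s => ?_⟩ ⟨fun s => ?_, fun s => ?_⟩ ⟨fun s => ?_, fun s => ?_⟩
      (fun s => ?_) k hF n l hn hl
    · exact key 0 s _ (by simp [dirs]; ring)
    · exact key 1 s _ (by simp [dirs]; ring)
    · exact key 2 s _ (by simp [dirs]; ring)
    · exact key 3 s _ (by simp [dirs]; ring)
    · exact key 4 s _ (by simp [dirs]; ring)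
    · exact key 5 s _ (by simp [dirs]; ring)
    · exact key 6 s _ (by simp [dirs]; ring)
    · exact key 7 s _ (by simp [dirs]; ring)
    · exact key 8 s _ (by simp [dirs]; ring)
  have hne : (𝓝[D] (0 : ℂ)).NeBot := mem_closure_iff_nhdsWithin_neBot.1 (hD 0)
  have l1 : Tendsto F (𝓝[D] 0) (𝓝 (F 0)) := hFc.tendsto.mono_left nhdsWithin_le_nhds
  have l2 : Tendsto F (𝓝[D] 0) (𝓝 (if n = l then 1 else 0)) :=
    tendsto_const_nhds.congr' (by
      filter_upwards [self_mem_nhdsWithin] with t ht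
      exact (hFD t ht).symm)
  have := tendsto_nhds_unique l1 l2
  simpa [F] using this

end Fin

/-- Biorthogonality of the elliptic 6j-symbols. -/
theorem sixj_biorthogonality (τ : ℂ) (r : ℝ) (hτ : 0 < τ.im) (hr : 0 < r)
    (k n l : ℕ) (hn : n ≤ k) (hl : l ≤ k) (α β γ δ : ℂ)
    (hd1 : ∀ m ≤ k, RdenomNZ τ r k n m β γ δ)
    (hd2 : ∀ m ≤ k, RdenomNZ τ r k m l δ α β) :
    ∑ m ∈ Finset.range (k + 1), Rnm τ r k n m α β γ δ * Rnm τ r k m l γ δ α β =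
      if n = l then 1 else 0 := by
  exact biorth_main τ r hτ hr k n l hn hl α β γ δ hd1 hd2

end Ell
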